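/- For every ξ = (ξ₁,ξ₂) ∈ ℝ²∖{0}, the matrices k₀(ξ) := (i·𝕜/|ξ|)·[[0,0,−ξ₁],[0,0,−ξ₂],[ξ₁,ξ₂,0]] and D(ξ) commute: D(ξ)·k₀(ξ) = k₀(ξ)·D(ξ). Consequently, with q(ξ) := (2μ|ξ|)^(−1/2)·(I₃ − (1 − √(1−m))·D(ξ)) and z(ξ) := (2μ|ξ|)^(1/2)·(I₃ + ((1−m)^(−1/2) − 1)·D(ξ)), one has q(ξ)·k₀(ξ)·z(ξ) = k₀(ξ). (The symmetrized Neumann–Poincaré operator (−S)^(−1/2)·K·(−S)^(1/2) has the same principal symbol k₀ as K.) -/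

import Mathlib

/-- The block-diagonal matrix `D(ξ) = diag(Λ(ξ), 1)`, `Λ(ξ)_{ij} = ξ_i ξ_j / |ξ|²`. -/
noncomputable def dMat (ξ : Fin 2 → ℝ) : Matrix (Fin 3) (Fin 3) ℝ :=
  Matrix.of fun p q =>
    (![ξ 0, ξ 1, 0] p * ![ξ 0, ξ 1, 0] q) / (ξ 0 ^ 2 + ξ 1 ^ 2) +
      (if p = 2 ∧ q = 2 then 1 else 0)

/-- The principal symbol `k₀(ξ)` of the elastic Neumann–Poincaré operator. -/
noncomputable def npPrincipalSymbol (lam mu : ℝ) (ξ : Fin 2 → ℝ) :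
    Matrix (Fin 3) (Fin 3) ℂ :=
  ((Complex.I * ((mu / (2 * (lam + 2 * mu)) : ℝ) : ℂ)) /
      ((Real.sqrt (ξ 0 ^ 2 + ξ 1 ^ 2) : ℝ) : ℂ)) •
    !![0, 0, -((ξ 0 : ℝ) : ℂ);
       0, 0, -((ξ 1 : ℝ) : ℂ);
       ((ξ 0 : ℝ) : ℂ), ((ξ 1 : ℝ) : ℂ), 0]

/-!
Put `v = (ξ, 0)` and `e = (0, 0, 1)`. Then `D(ξ)` is the orthogonal projection onto the plane
spanned by `v` and `e`, while `k₀(ξ)` is a multiple of `e vᵀ - v eᵀ`, whose range and corange are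
that plane; so the two commute. Since `D(ξ)` is idempotent, `z(ξ)` is the inverse of `q(ξ)`, and
conjugating `k₀(ξ)` by a polynomial in `D(ξ)` does nothing.
-/

open Matrix

section Algebra

variable {K A : Type*} [Field K] [Ring A] [Algebra K A] {p : A}

theorem one_sub_smul_mul_one_add_smul_eq_one (hp : IsIdempotentElem p) {r : K} (hr : r ≠ 0) :
    (1 - (1 - r) • p) * (1 + (r⁻¹ - 1) • p) = 1 := by
  have coeff_eq_zero : (r⁻¹ - 1) - (1 - r) - (1 - r) * (r⁻¹ - 1) = 0 := by
    field_simp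
    ring
  calc (1 - (1 - r) • p) * (1 + (r⁻¹ - 1) • p)
      = 1 + (r⁻¹ - 1) • p - (1 - r) • p - ((1 - r) * (r⁻¹ - 1)) • (p * p) := by
        simp only [sub_mul, mul_add, one_mul, mul_one, smul_mul_smul_comm]
        abel
    _ = 1 + ((r⁻¹ - 1) - (1 - r) - (1 - r) * (r⁻¹ - 1)) • p := by
        rw [hp.eq]
        module
    _ = 1 := by rw [coeff_eq_zero, zero_smul, add_zero]

theorem inv_smul_one_sub_mul_smul_one_add_eq_one (hp : IsIdempotentElem p) {s r : K}
    (hs : s ≠ 0) (hr : r ≠ 0) :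
    (s⁻¹ • (1 - (1 - r) • p)) * (s • (1 + (r⁻¹ - 1) • p)) = 1 := by
  rw [smul_mul_smul_comm, inv_mul_cancel₀ hs, one_smul,
    one_sub_smul_mul_one_add_smul_eq_one hp hr]

end Algebra

theorem commute_smul_one_sub_smul {R A : Type*} [CommRing R] [Ring A] [Algebra R A] {p k : A}
    (hpk : Commute p k) (a b : R) : Commute (a • (1 - b • p)) k :=
  ((Commute.one_left k).sub_left (hpk.smul_left b)).smul_left a

theorem mul_mul_eq_of_commute_of_mul_eq_one {M : Type*} [Monoid M] {q k z : M}
    (hqk : Commute q k) (hqz : q * z = 1) : q * k * z = k := by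
  rw [hqk.eq, mul_assoc, hqz, mul_one]

section Plane

variable {K n : Type*} [Field K] [Fintype n] {v w : n → K}

/-- The orthogonal projection onto the plane spanned by two orthogonal vectors `v` and `w`, for the
dot product. It has this meaning only if `v ⬝ᵥ v` and `w ⬝ᵥ w` are nonzero and `v ⬝ᵥ w = 0`. -/
def planeProj (v w : n → K) : Matrix n n K :=
  (v ⬝ᵥ v)⁻¹ • vecMulVec v v + (w ⬝ᵥ w)⁻¹ • vecMulVec w w

/-- The skew-symmetric matrix `w vᵀ - v wᵀ`, which generates the rotations of the plane spanned by
`v` and `w`. -/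
def planeSkew {K n : Type*} [Ring K] (v w : n → K) : Matrix n n K :=
  vecMulVec w v - vecMulVec v w

theorem planeProj_comm (v w : n → K) : planeProj v w = planeProj w v :=
  add_comm _ _

theorem transpose_planeProj (v w : n → K) : (planeProj v w)ᵀ = planeProj v w := by
  simp only [planeProj, transpose_add, transpose_smul, transpose_vecMulVec]

theorem planeProj_mulVec_left (hv : v ⬝ᵥ v ≠ 0) (hvw : v ⬝ᵥ w = 0) :
    planeProj v w *ᵥ v = v := by
  have hwv : w ⬝ᵥ v = 0 := by rw [dotProduct_comm, hvw]
  simp only [planeProj, add_mulVec, smul_mulVec, vecMulVec_mulVec, hwv, op_smul_eq_smul,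
    zero_smul, smul_zero, add_zero, inv_smul_smul₀ hv]

theorem planeProj_mulVec_right (hw : w ⬝ᵥ w ≠ 0) (hvw : v ⬝ᵥ w = 0) :
    planeProj v w *ᵥ w = w := by
  rw [planeProj_comm, planeProj_mulVec_left hw (by rw [dotProduct_comm, hvw])]

theorem vecMul_planeProj (u v w : n → K) : u ᵥ* planeProj v w = planeProj v w *ᵥ u := by
  rw [← mulVec_transpose, transpose_planeProj]

theorem isIdempotentElem_planeProj (hv : v ⬝ᵥ v ≠ 0) (hw : w ⬝ᵥ w ≠ 0) (hvw : v ⬝ᵥ w = 0) :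
    IsIdempotentElem (planeProj v w) := by
  have hPv := planeProj_mulVec_left hv hvw
  have hPw := planeProj_mulVec_right hw hvw
  calc planeProj v w * planeProj v w
      = (v ⬝ᵥ v)⁻¹ • vecMulVec (planeProj v w *ᵥ v) v +
          (w ⬝ᵥ w)⁻¹ • vecMulVec (planeProj v w *ᵥ w) w := by
        simp only [← mul_vecMulVec, ← Matrix.mul_smul, ← mul_add]
        rfl
    _ = planeProj v w := by rw [hPv, hPw, planeProj]

theorem commute_planeProj_planeSkew (hv : v ⬝ᵥ v ≠ 0) (hw : w ⬝ᵥ w ≠ 0) (hvw : v ⬝ᵥ w = 0) :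
    Commute (planeProj v w) (planeSkew v w) := by
  have hPv := planeProj_mulVec_left hv hvw
  have hPw := planeProj_mulVec_right hw hvw
  have proj_mul_skew : planeProj v w * planeSkew v w = planeSkew v w := by
    rw [planeSkew, mul_sub, mul_vecMulVec, mul_vecMulVec, hPv, hPw]
  have skew_mul_proj : planeSkew v w * planeProj v w = planeSkew v w := by
    rw [planeSkew, sub_mul, vecMulVec_mul, vecMulVec_mul, vecMul_planeProj, vecMul_planeProj,
      hPv, hPw]
  exact proj_mul_skew.trans skew_mul_proj.symm

end Plane

theorem symmetrized_np_same_principal_symbol_general {K L n : Type*} [Field K] [CommRing L]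
    [Fintype n] [DecidableEq n] (f : K →+* L) {v w : n → K}
    (hv : v ⬝ᵥ v ≠ 0) (hw : w ⬝ᵥ w ≠ 0) (hvw : v ⬝ᵥ w = 0)
    (c : L) {s r : K} (hs : s ≠ 0) (hr : r ≠ 0) :
    (planeProj v w).map f * (c • (planeSkew v w).map f) =
        (c • (planeSkew v w).map f) * (planeProj v w).map f ∧
      (s⁻¹ • (1 - (1 - r) • planeProj v w)).map f * (c • (planeSkew v w).map f) *
          (s • (1 + (r⁻¹ - 1) • planeProj v w)).map f =
        c • (planeSkew v w).map f := by
  have hcomm := commute_planeProj_planeSkew hv hw hvw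
  have hinv := inv_smul_one_sub_mul_smul_one_add_eq_one
    (isIdempotentElem_planeProj hv hw hvw) hs hr
  refine ⟨((hcomm.map f.mapMatrix).smul_right c).eq, ?_⟩
  apply mul_mul_eq_of_commute_of_mul_eq_one
  · exact ((commute_smul_one_sub_smul hcomm s⁻¹ (1 - r)).map f.mapMatrix).smul_right c
  · rw [← Matrix.map_mul, hinv, Matrix.map_one f f.map_zero f.map_one]

theorem dMat_eq_planeProj (ξ : Fin 2 → ℝ) :
    dMat ξ = planeProj ![ξ 0, ξ 1, 0] ![0, 0, 1] := by
  ext i j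
  fin_cases i <;> fin_cases j <;>
    simp [dMat, planeProj, dotProduct, Fin.sum_univ_three] <;> ring

theorem npPrincipalSymbol_eq_smul_planeSkew (lam mu : ℝ) (ξ : Fin 2 → ℝ) :
    npPrincipalSymbol lam mu ξ =
      ((Complex.I * ((mu / (2 * (lam + 2 * mu)) : ℝ) : ℂ)) /
        ((Real.sqrt (ξ 0 ^ 2 + ξ 1 ^ 2) : ℝ) : ℂ)) •
      (planeSkew ![ξ 0, ξ 1, 0] ![0, 0, 1]).map (algebraMap ℝ ℂ) := by
  rw [npPrincipalSymbol]
  congr 1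
  ext i j
  fin_cases i <;> fin_cases j <;> simp [planeSkew]

theorem sq_add_sq_pos_of_ne_zero {ξ : Fin 2 → ℝ} (hξ : ξ ≠ 0) : 0 < ξ 0 ^ 2 + ξ 1 ^ 2 := by
  have h := dotProduct_self_star_pos_iff.mpr hξ
  simpa [dotProduct, Fin.sum_univ_two, sq] using h

theorem lame_ratio_lt_one {lam mu : ℝ} (hmu : 0 < mu) (hlam2mu : 0 < lam + 2 * mu) :
    (lam + mu) / (2 * (lam + 2 * mu)) < 1 := by
  rw [div_lt_one (by positivity)]
  linarith

/-- `D(ξ)` commutes with `k₀(ξ)`; consequently, with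
`q(ξ) = (2μ|ξ|)^{-1/2}(I₃ − (1 − √(1−m))D(ξ))` and
`z(ξ) = (2μ|ξ|)^{1/2}(I₃ + ((1−m)^{-1/2} − 1)D(ξ))`, one has `q(ξ)·k₀(ξ)·z(ξ) = k₀(ξ)`:
the symmetrized NP operator has the same principal symbol as the NP operator itself. -/
theorem symmetrized_np_same_principal_symbol
    (lam mu : ℝ) (hmu : 0 < mu) (hlam2mu : 0 < lam + 2 * mu)
    (m : ℝ) (hm : m = (lam + mu) / (2 * (lam + 2 * mu)))
    (ξ : Fin 2 → ℝ) (hξ : ξ ≠ 0)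
    (q z : Matrix (Fin 3) (Fin 3) ℝ)
    (hq : q = (Real.sqrt (2 * mu * Real.sqrt (ξ 0 ^ 2 + ξ 1 ^ 2)))⁻¹ •
      ((1 : Matrix (Fin 3) (Fin 3) ℝ) - (1 - Real.sqrt (1 - m)) • dMat ξ))
    (hz : z = Real.sqrt (2 * mu * Real.sqrt (ξ 0 ^ 2 + ξ 1 ^ 2)) •
      ((1 : Matrix (Fin 3) (Fin 3) ℝ) + ((Real.sqrt (1 - m))⁻¹ - 1) • dMat ξ)) :
    (dMat ξ).map (algebraMap ℝ ℂ) * npPrincipalSymbol lam mu ξ =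
      npPrincipalSymbol lam mu ξ * (dMat ξ).map (algebraMap ℝ ℂ) ∧
    q.map (algebraMap ℝ ℂ) * npPrincipalSymbol lam mu ξ * z.map (algebraMap ℝ ℂ) =
      npPrincipalSymbol lam mu ξ := by
  have hnorm := sq_add_sq_pos_of_ne_zero hξ
  have hs : Real.sqrt (2 * mu * Real.sqrt (ξ 0 ^ 2 + ξ 1 ^ 2)) ≠ 0 := by positivity
  have hr : Real.sqrt (1 - m) ≠ 0 :=
    (Real.sqrt_pos.mpr (sub_pos.mpr (hm ▸ lame_ratio_lt_one hmu hlam2mu))).ne'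
  have hv : ![ξ 0, ξ 1, 0] ⬝ᵥ ![ξ 0, ξ 1, 0] ≠ 0 := by
    simpa [dotProduct, Fin.sum_univ_three, ← sq] using hnorm.ne'
  rw [hq, hz, npPrincipalSymbol_eq_smul_planeSkew, dMat_eq_planeProj]
  exact symmetrized_np_same_principal_symbol_general (algebraMap ℝ ℂ) hv
    (by simp [dotProduct, Fin.sum_univ_three]) (by simp [dotProduct, Fin.sum_univ_three]) _ hs hr
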